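/- arXiv:2405.20390 — 2 statements merged into one kernel-verified Lean document; each statement's English description precedes it below -/
import Mathlib

section
/- Let S ⊆ E be convex, let U : E → ℝ be L-smooth and μ-strongly convex on S (0 < μ ≤ L), let g* be a minimizer of U over S, and let (g_k, ξ_k) follow the Heavy-Ball iteration with γ = 2√μ and h = √μ/(4L), with g_k ∈ S for all k ≥ 0 (and g₀ − hξ₀ ∈ S). Then for all k ≥ 1, L^HB(g_{k+1}, ξ_{k+1}) ≤ (1 + μ/(16L))⁻¹ · L^HB(g_k, ξ_k). (Lemma C.3, Euclidean instance.) -/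
open RealInnerProductSpace

/-!
With `a = γh`, the scaled vectors `A = (γ / (1 - a)) (g - g*)` and `R = (h / (1 - a)) ∇U(g)` turn
one step of the iteration into `ξ ↦ (1 - a) (ξ - R)` and `A + ξ ↦ A + ξ - R`, so the contraction
becomes an inequality between inner products of `A`, `ξ` and `R`. Strong convexity provides all
of it except `‖R‖² ≤ ⟪A, R⟫ / 2`, which is cocoercivity of `∇U` together with `∇U(g*) = 0`. As
`S` may have empty interior, both facts are drawn from the trajectory. Three consecutive
positions lie in `S`, hence so does a short gradient step from `g`; by convexity each point `y`
of the segment from `g*` to `g` can move in that direction inside `S` by an amount proportional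
to `‖y - g*‖`, which gives cocoercivity locally, and summing along a geometric subdivision
accumulating at `g*` makes it global. Moreover the mechanical energy dissipates a multiple of
`‖ξ‖²` at each step, so `ξ` and `∇U(g)` tend to zero along the trajectory, which by strong
convexity converges to `g*`.
-/

section

open Filter Set
open scoped Topology NNReal

variable {E : Type*} [NormedAddCommGroup E] [InnerProductSpace ℝ E]
  {S : Set E} {U : E → ℝ} {G : E → E} {L : ℝ≥0} {μ γ h : ℝ} {gstar : E} {g ξ : ℕ → E}

/-- First-order `μ`-strong convexity on `S`, with an arbitrary vector field `G` in the role of the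
gradient of `U`; for `μ = 0` it says that `G` selects subgradients of `U` relative to `S`. -/
def IsStrongSubgradientOn (S : Set E) (U : E → ℝ) (G : E → E) (μ : ℝ) : Prop :=
  ∀ x ∈ S, ∀ y ∈ S, U x + ⟪G x, y - x⟫ + μ / 2 * ‖y - x‖ ^ 2 ≤ U y

/-- The Heavy-Ball iteration driven by the field `G`, with friction `γ`, step size `h`, positions
`g` and velocities `ξ`. -/
structure IsHeavyBallTrajectory (G : E → E) (γ h : ℝ) (g ξ : ℕ → E) : Prop where
  velocity_succ : ∀ k, ξ (k + 1) = (1 - γ * h) • ξ k - h • G (g k)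
  position_succ : ∀ k, g (k + 1) = g k + h • ξ (k + 1)

/-- The Heavy-Ball Lyapunov function `L^HB` at position `x` and velocity `v`; the potential is
evaluated at `x - h • v`, the previous position along a trajectory. -/
noncomputable def heavyBallLyapunov (U : E → ℝ) (gstar : E) (γ h : ℝ) (x v : E) : ℝ :=
  (1 / (1 - γ * h)) * (U (x - h • v) - U gstar) + (1 / 4 : ℝ) * ‖v‖ ^ 2
    + (1 / 4 : ℝ) * ‖(γ / (1 - γ * h)) • (x - gstar) + v‖ ^ 2

theorem norm_smul_sq (c : ℝ) (x : E) : ‖c • x‖ ^ 2 = c ^ 2 * ‖x‖ ^ 2 := by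
  rw [norm_smul, mul_pow, Real.norm_eq_abs, sq_abs]

theorem inner_sub_le_of_lipschitzOnWith (hLip : LipschitzOnWith L G S) {x y : E} (hx : x ∈ S)
    (hy : y ∈ S) : ⟪G x - G y, x - y⟫ ≤ L * ‖x - y‖ ^ 2 :=
  calc ⟪G x - G y, x - y⟫ ≤ ‖G x - G y‖ * ‖x - y‖ := real_inner_le_norm _ _
    _ ≤ L * ‖x - y‖ * ‖x - y‖ := by gcongr; exact hLip.norm_sub_le hx hy
    _ = L * ‖x - y‖ ^ 2 := by ring

namespace IsStrongSubgradientOn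

theorem add_inner_le (hG : IsStrongSubgradientOn S U G μ) (hμ : 0 ≤ μ) {x y : E} (hx : x ∈ S)
    (hy : y ∈ S) : U x + ⟪G x, y - x⟫ ≤ U y :=
  (le_add_of_nonneg_right (by positivity)).trans (hG x hx y hy)

theorem mul_norm_sub_sq_le_inner (hG : IsStrongSubgradientOn S U G μ) {x y : E} (hx : x ∈ S)
    (hy : y ∈ S) : μ * ‖y - x‖ ^ 2 ≤ ⟪G y - G x, y - x⟫ := by
  have hxy := hG x hx y hy
  have hyx := hG y hy x hx
  rw [← neg_sub y x, inner_neg_right, norm_neg] at hyx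
  rw [inner_sub_left]
  linarith

theorem sub_inner_le_apply_sub_smul (hG : IsStrongSubgradientOn S U G μ) {x v : E} (hx : x ∈ S)
    (hprev : x - h • v ∈ S) :
    U x - h * ⟪G x, v⟫ + μ * h ^ 2 / 2 * ‖v‖ ^ 2 ≤ U (x - h • v) := by
  have hle := hG x hx _ hprev
  rw [sub_sub_cancel_left, inner_neg_right, norm_neg, inner_smul_right, norm_smul_sq] at hle
  linarith

theorem half_mul_norm_sub_le_norm (hG : IsStrongSubgradientOn S U G μ) (hmin : IsMinOn U S gstar)
    (hgstar : gstar ∈ S) {x : E} (hx : x ∈ S) : μ / 2 * ‖x - gstar‖ ≤ ‖G x‖ := by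
  have hstrong := hG x hx gstar hgstar
  have hle := isMinOn_iff.mp hmin x hx
  have hcs := neg_le_of_abs_le (abs_real_inner_le_norm (G x) (gstar - x))
  rw [norm_sub_rev]
  rcases (norm_nonneg (gstar - x)).eq_or_lt with hzero | hpos
  · simp [← hzero]
  · refine le_of_mul_le_mul_right ?_ hpos
    linarith

end IsStrongSubgradientOn

theorem apply_zero_le_apply_one_of_mul_le {φ : ℝ → ℝ} {r : ℝ} (hr₀ : 0 < r) (hr₁ : r < 1)
    (hφ : ContinuousWithinAt φ (Ioc 0 1) 0) (hmul : ∀ t ∈ Ioc (0 : ℝ) 1, φ (r * t) ≤ φ t) :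
    φ 0 ≤ φ 1 := by
  have hmem (n : ℕ) : r ^ n ∈ Ioc (0 : ℝ) 1 := ⟨pow_pos hr₀ n, pow_le_one₀ hr₀.le hr₁.le⟩
  have hanti : Antitone fun n : ℕ => φ (r ^ n) :=
    antitone_nat_of_succ_le fun n => by simpa only [pow_succ'] using hmul _ (hmem n)
  have hlim : Tendsto (fun n : ℕ => φ (r ^ n)) atTop (𝓝 (φ 0)) :=
    hφ.tendsto.comp <| tendsto_nhdsWithin_iff.mpr
      ⟨tendsto_pow_atTop_nhds_zero_of_lt_one hr₀.le hr₁, .of_forall hmem⟩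
  simpa using hanti.le_of_tendsto hlim 0

namespace IsStrongSubgradientOn

theorem inner_sub_le_of_sub_mem (hG : IsStrongSubgradientOn S U G μ) (hμ : 0 ≤ μ)
    (hLip : LipschitzOnWith L G S) {x y w : E} (hx : x ∈ S) (hy : y ∈ S) (hw : y - w ∈ S) :
    ⟪G y - G x, w⟫ ≤ ⟪G y - G x, y - x⟫ + L * ‖w‖ ^ 2 := by
  have hxw := hG.add_inner_le hμ hx hw
  have hwy := hG.add_inner_le hμ hw hy
  have hyx := hG.add_inner_le hμ hy hx
  have hlip := inner_sub_le_of_lipschitzOnWith hLip hy hw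
  rw [sub_sub_cancel] at hwy hlip
  rw [sub_right_comm, inner_sub_right] at hxw
  rw [← neg_sub y x, inner_neg_right] at hyx
  rw [inner_sub_left] at hlip ⊢
  rw [inner_sub_left]
  linarith

theorem inner_sub_le_of_sub_smul_mem (hG : IsStrongSubgradientOn S U G μ) (hμ : 0 ≤ μ)
    (hS : Convex ℝ S) (hLip : LipschitzOnWith L G S) {x y w : E} {ε : ℝ} (hx : x ∈ S)
    (hy : y ∈ S) (hε : 0 < ε) (hw : y - ε • w ∈ S) :
    ⟪G y - G x, w⟫ ≤ ⟪G y - G x, y - x⟫ + L * ‖w‖ ^ 2 := by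
  set c : ℝ := ε / (1 + ε) with hc
  have hc₀ : 0 < c := by positivity
  have hc₁ : c < 1 := (div_lt_one (by positivity)).mpr (by linarith)
  have hcw : y - c • w ∈ S := by
    convert hS.lineMap_mem hy hw (t := (1 + ε)⁻¹)
      ⟨by positivity, inv_le_one_of_one_le₀ (by linarith)⟩ using 1
    rw [AffineMap.lineMap_apply_module', hc]
    module
  let p (t : ℝ) : E := AffineMap.lineMap x y t
  have hp {t : ℝ} (ht : t ∈ Icc (0 : ℝ) 1) : p t ∈ S := hS.lineMap_mem hx hy ht
  let φ (t : ℝ) : ℝ := ⟪G (p t), y - x - w⟫ + L * ‖w‖ ^ 2 * t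
  have hφ : ContinuousOn φ (Icc 0 1) :=
    ((hLip.continuousOn.comp AffineMap.lineMap_continuous.continuousOn fun _ => hp).inner
      continuousOn_const).add (by fun_prop)
  have hmul (t : ℝ) (ht : t ∈ Ioc (0 : ℝ) 1) : φ ((1 - c) * t) ≤ φ t := by
    have hct : 0 < c * t := mul_pos hc₀ ht.1
    have hp' : p ((1 - c) * t) ∈ S := hp ⟨by nlinarith [ht.1], by nlinarith [ht.1, ht.2]⟩
    have hpw : p t - (c * t) • w ∈ S := by
      convert hS.lineMap_mem hx hcw (Ioc_subset_Icc_self ht) using 1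
      simp only [p, AffineMap.lineMap_apply_module']
      module
    have hsub : p t - p ((1 - c) * t) = (c * t) • (y - x) := by
      simp only [p, AffineMap.lineMap_apply_module']
      module
    have hlocal := hG.inner_sub_le_of_sub_mem hμ hLip hp' (hp (Ioc_subset_Icc_self ht)) hpw
    rw [hsub, inner_smul_right, inner_smul_right, norm_smul_sq] at hlocal
    have hdiv : ⟪G (p t) - G (p ((1 - c) * t)), w⟫ ≤
        ⟪G (p t) - G (p ((1 - c) * t)), y - x⟫ + L * ‖w‖ ^ 2 * (c * t) :=
      le_of_mul_le_mul_left (by linarith) hct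
    simp only [φ, inner_sub_left, inner_sub_right (𝕜 := ℝ) _ (y - x) w] at hdiv ⊢
    linarith
  have h01 := apply_zero_le_apply_one_of_mul_le (sub_pos.mpr hc₁) (sub_lt_self 1 hc₀)
    ((hφ 0 (by simp)).mono Ioc_subset_Icc_self) hmul
  simp only [φ, p, AffineMap.lineMap_apply_zero, AffineMap.lineMap_apply_one,
    inner_sub_right (𝕜 := ℝ) _ (y - x) w] at h01
  rw [inner_sub_left, inner_sub_left]
  linarith

theorem norm_sub_sq_le (hG : IsStrongSubgradientOn S U G μ) (hμ : 0 ≤ μ) (hS : Convex ℝ S)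
    (hLip : LipschitzOnWith L G S) (hL : 0 < L) {x y : E} {ε : ℝ} (hx : x ∈ S) (hy : y ∈ S)
    (hε : 0 < ε) (hstep : y - ε • (G y - G x) ∈ S) :
    ‖G y - G x‖ ^ 2 ≤ 4 * L * ⟪G y - G x, y - x⟫ := by
  have hL' : (0 : ℝ) < L := hL
  have hw : y - (2 * L * ε) • (2 * L : ℝ)⁻¹ • (G y - G x) ∈ S := by
    rwa [smul_smul, mul_right_comm, mul_inv_cancel₀ (by positivity), one_mul]
  have hle := hG.inner_sub_le_of_sub_smul_mem hμ hS hLip hx hy (by positivity) hw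
  rw [inner_smul_right, real_inner_self_eq_norm_sq, norm_smul_sq] at hle
  field_simp at hle
  linarith

end IsStrongSubgradientOn

namespace IsHeavyBallTrajectory

theorem position_succ_sub (htraj : IsHeavyBallTrajectory G γ h g ξ) (k : ℕ) :
    g (k + 1) - h • ξ (k + 1) = g k := by
  rw [htraj.position_succ, add_sub_cancel_right]

theorem smul_grad (htraj : IsHeavyBallTrajectory G γ h g ξ) (k : ℕ) :
    h • G (g k) = (1 - γ * h) • ξ k - ξ (k + 1) := by
  rw [htraj.velocity_succ, sub_sub_cancel]

theorem sub_smul_grad_mem (htraj : IsHeavyBallTrajectory G γ h g ξ) (hS : Convex ℝ S)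
    (hγh : γ * h ≤ 1) {k : ℕ} (hprev : g k - h • ξ k ∈ S) (hnext : g (k + 1) ∈ S) :
    g k - (h ^ 2 / (2 - γ * h)) • G (g k) ∈ S := by
  have hden : 0 < 2 - γ * h := by linarith
  convert hS.lineMap_mem hprev hnext (t := (2 - γ * h)⁻¹)
    ⟨by positivity, inv_le_one_of_one_le₀ (by linarith)⟩ using 1
  rw [AffineMap.lineMap_apply_module', htraj.position_succ, htraj.velocity_succ]
  match_scalars <;> field_simp <;> ring

theorem norm_grad_sq_le (htraj : IsHeavyBallTrajectory G γ h g ξ) (hh : h ≠ 0) (hγh : γ * h ≤ 1)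
    (hG : IsStrongSubgradientOn S U G μ) (hμ : 0 ≤ μ) (hS : Convex ℝ S)
    (hLip : LipschitzOnWith L G S) (hL : 0 < L) (hgstar : gstar ∈ S) (hzero : G gstar = 0) {k : ℕ}
    (hgk : g k ∈ S) (hprev : g k - h • ξ k ∈ S) (hnext : g (k + 1) ∈ S) :
    ‖G (g k)‖ ^ 2 ≤ 4 * L * ⟪G (g k), g k - gstar⟫ := by
  have hε : 0 < h ^ 2 / (2 - γ * h) := div_pos (by positivity) (by linarith)
  have hstep := htraj.sub_smul_grad_mem hS hγh hprev hnext
  rw [← sub_zero (G (g k)), ← hzero] at hstep ⊢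
  exact hG.norm_sub_sq_le hμ hS hLip hL hgstar hgk hε hstep

theorem energy_succ_add_le (htraj : IsHeavyBallTrajectory G γ h g ξ) (hγh : γ * h ≤ 1)
    (hG : IsStrongSubgradientOn S U G μ) (hμ : 0 ≤ μ) (hLip : LipschitzOnWith L G S)
    (hgS : ∀ k, g k ∈ S) (k : ℕ) :
    U (g (k + 1)) + (1 - γ * h) / 2 * ‖ξ (k + 1)‖ ^ 2 + h * (γ - L * h) * ‖ξ (k + 1)‖ ^ 2 ≤
      U (g k) + (1 - γ * h) / 2 * ‖ξ k‖ ^ 2 := by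
  have hdiff : g (k + 1) - g k = h • ξ (k + 1) := by rw [htraj.position_succ, add_sub_cancel_left]
  have hconv := hG.add_inner_le hμ (hgS (k + 1)) (hgS k)
  have hlip := inner_sub_le_of_lipschitzOnWith hLip (hgS (k + 1)) (hgS k)
  rw [← neg_sub, inner_neg_right, hdiff, inner_smul_right] at hconv
  rw [hdiff, inner_sub_left, inner_smul_right, inner_smul_right, norm_smul_sq] at hlip
  have hgrad : h * ⟪G (g k), ξ (k + 1)⟫ =
      (1 - γ * h) * ⟪ξ k, ξ (k + 1)⟫ - ‖ξ (k + 1)‖ ^ 2 := by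
    rw [← real_inner_smul_left, htraj.smul_grad, inner_sub_left, real_inner_smul_left,
      real_inner_self_eq_norm_sq]
  have hyoung : 0 ≤ (1 - γ * h) * ‖ξ k - ξ (k + 1)‖ ^ 2 :=
    mul_nonneg (sub_nonneg.mpr hγh) (sq_nonneg _)
  rw [norm_sub_sq_real] at hyoung
  linarith

theorem tendsto_velocity (htraj : IsHeavyBallTrajectory G γ h g ξ) (hh : 0 < h) (hγh : γ * h ≤ 1)
    (hLh : L * h < γ) (hG : IsStrongSubgradientOn S U G μ) (hμ : 0 ≤ μ)
    (hLip : LipschitzOnWith L G S) (hbdd : BddBelow (U '' S)) (hgS : ∀ k, g k ∈ S) :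
    Tendsto ξ atTop (𝓝 0) := by
  obtain ⟨c, hc⟩ := hbdd
  have hrate : 0 < h * (γ - L * h) := mul_pos hh (sub_pos.mpr hLh)
  let energy (k : ℕ) : ℝ := U (g k) + (1 - γ * h) / 2 * ‖ξ k‖ ^ 2
  have hlower (n : ℕ) : c ≤ energy n :=
    le_add_of_le_of_nonneg (hc (mem_image_of_mem U (hgS n)))
      (mul_nonneg (by linarith) (sq_nonneg _))
  have hsum : Summable fun k => h * (γ - L * h) * ‖ξ (k + 1)‖ ^ 2 := by
    refine summable_of_sum_range_le (c := energy 0 - c) (fun k => by positivity) fun n => ?_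
    calc ∑ k ∈ Finset.range n, h * (γ - L * h) * ‖ξ (k + 1)‖ ^ 2
        ≤ ∑ k ∈ Finset.range n, (energy k - energy (k + 1)) :=
          Finset.sum_le_sum fun k _ => le_sub_iff_add_le'.mpr
            (htraj.energy_succ_add_le hγh hG hμ hLip hgS k)
      _ = energy 0 - energy n := Finset.sum_range_sub' energy n
      _ ≤ energy 0 - c := sub_le_sub_left (hlower n) _
  have hsq := ((summable_mul_left_iff hrate.ne').mp hsum).tendsto_atTop_zero
  rw [← tendsto_add_atTop_iff_nat 1, tendsto_zero_iff_norm_tendsto_zero]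
  simpa using hsq.sqrt

theorem tendsto_grad (htraj : IsHeavyBallTrajectory G γ h g ξ) (hh : h ≠ 0)
    (hξ : Tendsto ξ atTop (𝓝 0)) : Tendsto (fun k => G (g k)) atTop (𝓝 0) := by
  have hlim := ((hξ.const_smul (1 - γ * h)).sub (hξ.comp (tendsto_add_atTop_nat 1))).const_smul h⁻¹
  simp only [smul_zero, sub_zero] at hlim
  exact hlim.congr fun k => by
    rw [Function.comp_apply, ← htraj.smul_grad, inv_smul_smul₀ hh]

theorem grad_eq_zero_of_isMinOn (htraj : IsHeavyBallTrajectory G γ h g ξ) (hh : 0 < h)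
    (hγh : γ * h ≤ 1) (hLh : L * h < γ) (hG : IsStrongSubgradientOn S U G μ) (hμ : 0 < μ)
    (hLip : LipschitzOnWith L G S) (hgstar : gstar ∈ S) (hmin : IsMinOn U S gstar)
    (hgS : ∀ k, g k ∈ S) : G gstar = 0 := by
  have hbdd : BddBelow (U '' S) := ⟨U gstar, forall_mem_image.mpr (isMinOn_iff.mp hmin)⟩
  have hgrad : Tendsto (fun k => G (g k)) atTop (𝓝 0) :=
    htraj.tendsto_grad hh.ne' (htraj.tendsto_velocity hh hγh hLh hG hμ.le hLip hbdd hgS)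
  have hg : Tendsto g atTop (𝓝 gstar) := by
    have hlim := hgrad.norm.const_mul (2 / μ)
    rw [norm_zero, mul_zero] at hlim
    refine tendsto_iff_norm_sub_tendsto_zero.mpr
      (squeeze_zero (fun _ => norm_nonneg _) (fun k => ?_) hlim)
    have hle := hG.half_mul_norm_sub_le_norm hmin hgstar (hgS k)
    rw [div_mul_eq_mul_div, le_div_iff₀ hμ]
    linarith
  have hgstar_lim : Tendsto (fun k => G (g k)) atTop (𝓝 (G gstar)) :=
    (hLip.continuousOn gstar hgstar).tendsto.comp
      (tendsto_nhdsWithin_iff.mpr ⟨hg, .of_forall hgS⟩)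
  exact tendsto_nhds_unique hgstar_lim hgrad

end IsHeavyBallTrajectory

theorem scaled_lyapunov_contraction {a d : ℝ} {A v R : E} (ha₀ : 0 ≤ a) (ha : a ≤ 1 / 2)
    (hd : a * d + a * (1 - a) / 8 * ‖A‖ ^ 2 ≤ (1 - a) * ⟪A, R⟫)
    (hA : a * ‖A‖ ^ 2 ≤ 4 * ⟪A, R⟫) (hR : ‖R‖ ^ 2 ≤ ⟪A, R⟫ / 2) :
    (1 + a / 8) * (d + 1 / 4 * ‖(1 - a) • (v - R)‖ ^ 2 + 1 / 4 * ‖A + v - R‖ ^ 2) ≤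
      d - ⟪v, R⟫ + a ^ 2 / 8 * ‖v‖ ^ 2 + 1 / 4 * ‖v‖ ^ 2 + 1 / 4 * ‖A + v‖ ^ 2 := by
  have hAR : 0 ≤ ⟪A, R⟫ := by linarith [sq_nonneg ‖R‖]
  have hAv : ⟪A, v⟫ ≤ ‖A‖ ^ 2 / 8 + 2 * ‖v‖ ^ 2 := by
    have hsq := sq_nonneg ‖A - (4 : ℝ) • v‖
    rw [norm_sub_sq_real, inner_smul_right, norm_smul_sq] at hsq
    linarith
  have hvR : ⟪v, R⟫ ≤ ‖v‖ ^ 2 / 4 + ‖R‖ ^ 2 := by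
    have hsq := sq_nonneg ‖v - (2 : ℝ) • R‖
    rw [norm_sub_sq_real, inner_smul_right, norm_smul_sq] at hsq
    linarith
  -- The coefficients that remain in the difference of the two sides: of `-⟪v, R⟫` after using `hd`,
  -- of `‖v‖²` after also using `hAv` and `hvR`, and of `⟪A, R⟫` after using all the hypotheses.
  have hcoeff_vR : 0 ≤ 7 * a / 8 - 3 * a ^ 2 / 8 - a ^ 3 / 16 := by
    nlinarith [pow_le_pow_left₀ ha₀ ha 2]
  have hcoeff_v : 0 ≤ 3 * a / 32 + a ^ 2 / 32 - a ^ 3 / 64 := by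
    nlinarith [pow_le_pow_left₀ ha₀ ha 2]
  have hcoeff_AR : 0 ≤ 1 / 32 - 3 * a / 32 + 3 * a ^ 2 / 32 + a ^ 3 / 64 := by
    nlinarith [sq_nonneg (a - 1 / 2), pow_nonneg ha₀ 3]
  rw [norm_smul_sq, norm_sub_sq_real v, norm_sub_sq_real (A + v), norm_add_sq_real,
    inner_add_left]
  linarith [mul_le_mul_of_nonneg_left hAv (by positivity : 0 ≤ a / 16),
    mul_le_mul_of_nonneg_left hvR hcoeff_vR, mul_nonneg hcoeff_v (sq_nonneg ‖v‖),
    mul_nonneg hcoeff_AR hAR,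
    mul_le_mul_of_nonneg_left hA (by positivity : 0 ≤ (3 + 2 * a) / 128),
    mul_le_mul_of_nonneg_left hR (by nlinarith [pow_nonneg ha₀ 3] :
      0 ≤ 1 / 2 + 7 * a / 16 - 3 * a ^ 2 / 16 - a ^ 3 / 32)]

theorem IsHeavyBallTrajectory.lyapunov_succ (htraj : IsHeavyBallTrajectory G γ h g ξ)
    (hγh : γ * h ≠ 1) (U : E → ℝ) (gstar : E) (k : ℕ) :
    heavyBallLyapunov U gstar γ h (g (k + 1)) (ξ (k + 1)) =
      (U (g k) - U gstar) / (1 - γ * h)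
        + 1 / 4 * ‖(1 - γ * h) • (ξ k - (h / (1 - γ * h)) • G (g k))‖ ^ 2
        + 1 / 4 * ‖(γ / (1 - γ * h)) • (g k - gstar) + ξ k
            - (h / (1 - γ * h)) • G (g k)‖ ^ 2 := by
  have hne : 1 - γ * h ≠ 0 := sub_ne_zero.mpr hγh.symm
  have hvel : ξ (k + 1) = (1 - γ * h) • (ξ k - (h / (1 - γ * h)) • G (g k)) := by
    rw [htraj.velocity_succ, smul_sub, smul_smul, mul_div_cancel₀ _ hne]
  have hshadow : (γ / (1 - γ * h)) • (g (k + 1) - gstar) + ξ (k + 1) =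
      (γ / (1 - γ * h)) • (g k - gstar) + ξ k - (h / (1 - γ * h)) • G (g k) := by
    rw [htraj.position_succ, htraj.velocity_succ]
    match_scalars <;> field_simp <;> ring
  rw [heavyBallLyapunov, htraj.position_succ_sub, hshadow, hvel, one_div_mul_eq_div]

theorem IsStrongSubgradientOn.scaled_sub_inner_le (hG : IsStrongSubgradientOn S U G μ)
    (hγ : γ ^ 2 = 4 * μ) (hγh₀ : 0 ≤ γ * h) (hγh : γ * h < 1) {x v : E} (hx : x ∈ S)
    (hprev : x - h • v ∈ S) (c : ℝ) :
    (U x - c) / (1 - γ * h) - ⟪v, (h / (1 - γ * h)) • G x⟫ + (γ * h) ^ 2 / 8 * ‖v‖ ^ 2 ≤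
      1 / (1 - γ * h) * (U (x - h • v) - c) := by
  have hback := hG.sub_inner_le_apply_sub_smul hx hprev
  have hμh : μ * h ^ 2 = (γ * h) ^ 2 / 4 := by rw [mul_pow, hγ]; ring
  have hpos : 0 < 1 - γ * h := sub_pos.mpr hγh
  calc (U x - c) / (1 - γ * h) - ⟪v, (h / (1 - γ * h)) • G x⟫ + (γ * h) ^ 2 / 8 * ‖v‖ ^ 2
      ≤ (U x - c) / (1 - γ * h) - h * ⟪G x, v⟫ / (1 - γ * h)
          + (γ * h) ^ 2 / 8 * ‖v‖ ^ 2 / (1 - γ * h) := by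
        rw [real_inner_smul_right, real_inner_comm, div_mul_eq_mul_div]
        gcongr
        exact le_div_self (by positivity) hpos (by linarith)
    _ = 1 / (1 - γ * h) * (U x - h * ⟪G x, v⟫ + μ * h ^ 2 / 2 * ‖v‖ ^ 2 - c) := by
        rw [hμh]; ring
    _ ≤ 1 / (1 - γ * h) * (U (x - h • v) - c) := by gcongr

theorem IsHeavyBallTrajectory.lyapunov_succ_le_of_gradient_bound
    (htraj : IsHeavyBallTrajectory G γ h g ξ) (hγ : γ ^ 2 = 4 * μ) (hγh₀ : 0 ≤ γ * h)
    (hγh : γ * h ≤ 1 / 2) (hG : IsStrongSubgradientOn S U G μ) (hgstar : gstar ∈ S)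
    (hzero : G gstar = 0) {k : ℕ} (hgk : g k ∈ S) (hprev : g k - h • ξ k ∈ S)
    (hgrad : h ^ 2 * ‖G (g k)‖ ^ 2 ≤ γ * h / 2 * ⟪G (g k), g k - gstar⟫) :
    (1 + γ * h / 8) * heavyBallLyapunov U gstar γ h (g (k + 1)) (ξ (k + 1)) ≤
      heavyBallLyapunov U gstar γ h (g k) (ξ k) := by
  rw [htraj.lyapunov_succ (by linarith) U gstar k, heavyBallLyapunov]
  have hup := hG _ hgk _ hgstar
  have hmono := hG.mul_norm_sub_sq_le_inner hgstar hgk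
  rw [← neg_sub (g k) gstar, inner_neg_right, norm_neg] at hup
  rw [hzero, sub_zero] at hmono
  set a := γ * h with ha
  set x := g k - gstar
  set q := G (g k)
  set v := ξ k
  have hb : 0 < 1 - a := by linarith
  have hAA : ‖(γ / (1 - a)) • x‖ ^ 2 = 4 * μ * ‖x‖ ^ 2 / (1 - a) ^ 2 := by
    rw [norm_smul_sq, div_pow, hγ, div_mul_eq_mul_div]
  have hRR : ‖(h / (1 - a)) • q‖ ^ 2 = h ^ 2 * ‖q‖ ^ 2 / (1 - a) ^ 2 := by
    rw [norm_smul_sq, div_pow, div_mul_eq_mul_div]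
  have hAR : ⟪(γ / (1 - a)) • x, (h / (1 - a)) • q⟫ = a * ⟪q, x⟫ / (1 - a) ^ 2 := by
    rw [real_inner_smul_left, real_inner_smul_right, real_inner_comm, ha]
    field_simp
  have hscaled := scaled_lyapunov_contraction (d := (U (g k) - U gstar) / (1 - a))
    (A := (γ / (1 - a)) • x) (v := v) (R := (h / (1 - a)) • q) hγh₀ hγh
    (by
      rw [hAA, hAR]
      field_simp
      linarith [mul_le_mul_of_nonneg_left hup hγh₀])
    (by
      rw [hAA, hAR]
      field_simp
      linarith [mul_le_mul_of_nonneg_left hmono hγh₀])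
    (by rw [hRR, hAR]; field_simp; linarith)
  linarith [hG.scaled_sub_inner_le hγ hγh₀ (by linarith) hgk hprev (U gstar)]

theorem heavy_ball_lyapunov_contraction_general (hS : Convex ℝ S) (hμ : 0 < μ) (hμL : μ ≤ L)
    (hLip : LipschitzOnWith L G S) (hG : IsStrongSubgradientOn S U G μ) (hgstar : gstar ∈ S)
    (hmin : IsMinOn U S gstar) (hγ : γ = 2 * √μ) (hh : 0 < h) (hhL : h ≤ √μ / (4 * L))
    (htraj : IsHeavyBallTrajectory G γ h g ξ) (hgS : ∀ k, g k ∈ S)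
    (hg0S : g 0 - h • ξ 0 ∈ S) (k : ℕ) :
    heavyBallLyapunov U gstar γ h (g (k + 1)) (ξ (k + 1)) ≤
      (1 + γ * h / 8)⁻¹ * heavyBallLyapunov U gstar γ h (g k) (ξ k) := by
  have hL : (0 : ℝ) < L := hμ.trans_le hμL
  have hγ₀ : 0 < γ := by rw [hγ]; positivity
  have hγsq : γ ^ 2 = 4 * μ := by rw [hγ, mul_pow, Real.sq_sqrt hμ.le]; norm_num
  have hLh : 8 * (L * h) ≤ γ := by rw [le_div_iff₀ (by positivity)] at hhL; linarith
  have hγh : γ * h ≤ 1 / 2 := by nlinarith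
  have hprev : g k - h • ξ k ∈ S := by
    cases k with
    | zero => exact hg0S
    | succ j => rw [htraj.position_succ_sub]; exact hgS j
  have hzero : G gstar = 0 := htraj.grad_eq_zero_of_isMinOn hh (by linarith)
    (by linarith [mul_pos hL hh]) hG hμ hLip hgstar hmin hgS
  have hcoco := htraj.norm_grad_sq_le hh.ne' (by linarith) hG hμ.le hS hLip hL hgstar hzero (hgS k)
    hprev (hgS (k + 1))
  have hgrad : h ^ 2 * ‖G (g k)‖ ^ 2 ≤ γ * h / 2 * ⟪G (g k), g k - gstar⟫ := by
    have hinner : 0 ≤ ⟪G (g k), g k - gstar⟫ :=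
      nonneg_of_mul_nonneg_right ((sq_nonneg _).trans hcoco) (by positivity)
    calc h ^ 2 * ‖G (g k)‖ ^ 2 ≤ h ^ 2 * (4 * L * ⟪G (g k), g k - gstar⟫) := by gcongr
      _ = 8 * (L * h) * h / 2 * ⟪G (g k), g k - gstar⟫ := by ring
      _ ≤ γ * h / 2 * ⟪G (g k), g k - gstar⟫ := by gcongr
  rw [inv_mul_eq_div, le_div_iff₀' (by positivity)]
  exact htraj.lyapunov_succ_le_of_gradient_bound hγsq (by positivity) hγh hG hgstar hzero (hgS k)
    hprev hgrad

end

/-- Lemma C.3 (contraction of the Heavy-Ball Lyapunov function with `γ = 2√μ`,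
`h = √μ/(4L)`), Euclidean instance. -/
theorem heavy_ball_lyapunov_contraction
    {E : Type*} [NormedAddCommGroup E] [InnerProductSpace ℝ E] [CompleteSpace E]
    (S : Set E) (hS : Convex ℝ S)
    (U : E → ℝ) (L μ : ℝ) (hμ : 0 < μ) (hμL : μ ≤ L)
    (hsmooth : ∀ x y : E, ‖gradient U x - gradient U y‖ ≤ L * ‖x - y‖)
    (hstrong : ∀ x ∈ S, ∀ y ∈ S,
      U x + ⟪gradient U x, y - x⟫ + μ / 2 * ‖y - x‖ ^ 2 ≤ U y)
    (gstar : E) (hgstarS : gstar ∈ S) (hmin : ∀ x ∈ S, U gstar ≤ U x)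
    (γ h : ℝ) (hγ : γ = 2 * Real.sqrt μ) (hh : h = Real.sqrt μ / (4 * L))
    (g ξ : ℕ → E)
    (hξ : ∀ k : ℕ, ξ (k + 1) = (1 - γ * h) • ξ k - h • gradient U (g k))
    (hg : ∀ k : ℕ, g (k + 1) = g k + h • ξ (k + 1))
    (hgS : ∀ k : ℕ, g k ∈ S) (hg0S : g 0 - h • ξ 0 ∈ S)
    (LHB : E → E → ℝ)
    (hLHB : ∀ x v : E, LHB x v =
      (1 / (1 - γ * h)) * (U (x - h • v) - U gstar) + (1 / 4 : ℝ) * ‖v‖ ^ 2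
        + (1 / 4 : ℝ) * ‖(γ / (1 - γ * h)) • (x - gstar) + v‖ ^ 2) :
    ∀ k : ℕ, 1 ≤ k →
      LHB (g (k + 1)) (ξ (k + 1)) ≤ (1 + μ / (16 * L))⁻¹ * LHB (g k) (ξ k) := by
  intro k _
  have hL : 0 < L := hμ.trans_le hμL
  have hrate : μ / (16 * L) = γ * h / 8 := by
    rw [hγ, hh]
    nth_rewrite 1 [← Real.mul_self_sqrt hμ.le]
    field_simp
    norm_num
  obtain rfl : LHB = heavyBallLyapunov U gstar γ h := funext₂ hLHB
  rw [hrate]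
  lift L to NNReal using hL.le
  exact heavy_ball_lyapunov_contraction_general hS hμ hμL
    (lipschitzOnWith_iff_norm_sub_le.mpr fun x _ y _ => hsmooth x y) hstrong hgstarS
    (isMinOn_iff.mpr hmin) hγ (by rw [hh]; positivity) hh.le ⟨hξ, hg⟩ hgS hg0S k
end

section
/- Let S ⊆ E be convex, let U : E → ℝ be L-smooth and μ-strongly convex on S (0 < μ ≤ L), let g* be a minimizer of U over S with ∇U(g*) = 0, set γ = 2√μ and h = min{1/√(2L), 1/2}, and let (g_k, ξ_k) follow the NAG-SC iteration with g_k ∈ S for all k ≥ 0 (and g₀ − hξ₀ ∈ S). Then for all k ≥ 1, L^NAG(g_{k+1}, ξ_{k+1}) − L^NAG(g_k, ξ_k) ≤ −b·L^NAG(g_{k+1}, ξ_{k+1}), where b := (√μ/30)·min{1/√(2L), 1/2}. (Lemma D.1, Euclidean instance, in which the curvature term p(a) equals 1.) -/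
open RealInnerProductSpace

open Filter Topology NNReal

/-!
Rescaling `U` by `h ^ 2` and the momentum by `h` turns the iteration with friction `γ` and step `h`
into the iteration with friction `q = γ * h` and step `1`, and multiplies the Lyapunov function by
`h ^ 2`; so one may take `h = 1`, where the objective is `q ^ 2 / 4`-strongly convex with
`1 / 2`-Lipschitz gradient. An exact energy balance together with strong convexity and cocoercivity
then bounds the decrease of the Lyapunov function below by a combination of `‖d'‖ ^ 2` and
`⟪∇U x, x - g* - ∇U x⟫`, where `x` is the current position and `d'` the new momentum, and these two
quantities also control its value.

Convexity is only available on `S`, which may have empty interior, so cocoercivity cannot be had by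
stepping along the gradient. It is proved instead for gradients in the direction space of `S`, where
arbitrarily short steps stay in `S` up to a small perturbation of the base points, and the
recursion shows that the gradients along the iterates lie in that space.
-/

theorem mul_min_one_div_sqrt_sq_le {L a : ℝ} (hL : 0 < L) (ha : 0 < a) :
    L * (min (1 / √(2 * L)) a) ^ 2 ≤ 1 / 2 := by
  calc L * (min (1 / √(2 * L)) a) ^ 2 ≤ L * (1 / √(2 * L)) ^ 2 := by
        gcongr; exact min_le_left _ _
    _ = 1 / 2 := by rw [div_pow, Real.sq_sqrt (by positivity)]; field_simp

theorem norm_add₃_sq_le {E : Type*} [SeminormedAddCommGroup E] (a b c : E) :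
    ‖a + b + c‖ ^ 2 ≤ 3 * (‖a‖ ^ 2 + ‖b‖ ^ 2 + ‖c‖ ^ 2) := by
  calc ‖a + b + c‖ ^ 2 ≤ (‖a‖ + ‖b‖ + ‖c‖) ^ 2 := by gcongr; exact norm_add₃_le
    _ ≤ 3 * (‖a‖ ^ 2 + ‖b‖ ^ 2 + ‖c‖ ^ 2) := by
      linarith [sq_nonneg (‖a‖ - ‖b‖), sq_nonneg (‖a‖ - ‖c‖), sq_nonneg (‖b‖ - ‖c‖)]

theorem exists_nonneg_smul_sub_eq_of_mem_vectorSpan {V : Type*} [AddCommGroup V] [Module ℝ V]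
    {S : Set V} (hS : Convex ℝ S) (hne : S.Nonempty) {v : V} (hv : v ∈ vectorSpan ℝ S) :
    ∃ a ∈ S, ∃ b ∈ S, ∃ t : ℝ, 0 ≤ t ∧ v = t • (a - b) := by
  unfold vectorSpan at hv
  induction hv using Submodule.span_induction with
  | mem v hv =>
    obtain ⟨a, ha, b, hb, rfl⟩ := Set.mem_vsub.1 hv
    exact ⟨a, ha, b, hb, 1, zero_le_one, by simp⟩
  | zero =>
    obtain ⟨a, ha⟩ := hne
    exact ⟨a, ha, a, ha, 0, le_rfl, by simp⟩
  | add v w _ _ hv hw =>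
    obtain ⟨a, ha, b, hb, t, ht, rfl⟩ := hv
    obtain ⟨a', ha', b', hb', t', ht', rfl⟩ := hw
    obtain ⟨p, hp, hpa⟩ := hS.exists_mem_add_smul_eq ha ha' ht ht'
    obtain ⟨q, hq, hqb⟩ := hS.exists_mem_add_smul_eq hb hb' ht ht'
    refine ⟨p, hp, q, hq, t + t', add_nonneg ht ht', ?_⟩
    rw [smul_sub (t + t'), hpa, hqb]
    module
  | smul c v _ hv =>
    obtain ⟨a, ha, b, hb, t, ht, rfl⟩ := hv
    rcases le_total 0 c with hc | hc
    · exact ⟨a, ha, b, hb, c * t, mul_nonneg hc ht, smul_smul c t _⟩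
    · exact ⟨b, hb, a, ha, -c * t, mul_nonneg (neg_nonneg.2 hc) ht, by module⟩

section Cocoercivity

variable {E : Type*} [NormedAddCommGroup E] [InnerProductSpace ℝ E]
  {S : Set E} {U : E → ℝ} {G : E → E} {μ : ℝ} {K : ℝ≥0} {x y v : E}

/-- First-order `μ`-strong convexity of `U` on `S`, with `G` in the role of the gradient: each `G x`
is a `μ`-strong subgradient of `U` restricted to `S`. Plain convexity is the case `μ = 0`. -/
def StrongSubgradientOn (U : E → ℝ) (G : E → E) (μ : ℝ) (S : Set E) : Prop :=
  ∀ x ∈ S, ∀ y ∈ S, U x + ⟪G x, y - x⟫ + μ / 2 * ‖y - x‖ ^ 2 ≤ U y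

namespace StrongSubgradientOn

theorem mono (hU : StrongSubgradientOn U G μ S) {ν : ℝ} (hν : ν ≤ μ) :
    StrongSubgradientOn U G ν S := fun x hx y hy =>
  le_trans (by gcongr) (hU x hx y hy)

theorem const_mul (hU : StrongSubgradientOn U G μ S) {a : ℝ} (ha : 0 ≤ a) :
    StrongSubgradientOn (fun x => a * U x) (fun x => a • G x) (a * μ) S := fun x hx y hy => by
  have h := mul_le_mul_of_nonneg_left (hU x hx y hy) ha
  rw [real_inner_smul_left]
  linarith

theorem add_inner_le (hU : StrongSubgradientOn U G 0 S) (hx : x ∈ S) (hy : y ∈ S) :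
    U x + ⟪G x, y - x⟫ ≤ U y := by
  simpa using hU x hx y hy

-- Halving the segment improves a valid constant `C` to `C / 2 + K / 4`, with fixed point `K / 2`.
theorem le_add_inner_add_one_add_pow (hU : StrongSubgradientOn U G 0 S) (hS : Convex ℝ S)
    (hG : LipschitzOnWith K G S) (n : ℕ) (hx : x ∈ S) (hy : y ∈ S) :
    U y ≤ U x + ⟪G x, y - x⟫ + K / 2 * (1 + (1 / 2) ^ n) * ‖y - x‖ ^ 2 := by
  have inner_sub_le {p q : E} (hp : p ∈ S) (hq : q ∈ S) (w : E) :
      ⟪G q, w⟫ ≤ ⟪G p, w⟫ + K * ‖q - p‖ * ‖w‖ := by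
    have h := (real_inner_le_norm (G q - G p) w).trans
      (mul_le_mul_of_nonneg_right (hG.norm_sub_le hq hp) (norm_nonneg w))
    rw [inner_sub_left] at h
    linarith
  induction n generalizing x y with
  | zero =>
    have hyx := hU.add_inner_le hy hx
    rw [← neg_sub y x, inner_neg_right] at hyx
    linarith [inner_sub_le hx hy (y - x)]
  | succ n ih =>
    have hm : midpoint ℝ x y ∈ S := hS.midpoint_mem hx hy
    have hxm := ih hx hm
    have hmy := ih hm hy
    have hG' := inner_sub_le hx hm (y - x)
    simp only [midpoint_sub_left, right_sub_midpoint, inner_smul_right, norm_smul, invOf_eq_inv,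
      norm_inv, Real.norm_ofNat] at hxm hmy hG'
    rw [pow_succ]
    linarith

theorem le_add_inner_add_sq (hU : StrongSubgradientOn U G 0 S) (hS : Convex ℝ S)
    (hG : LipschitzOnWith K G S) (hx : x ∈ S) (hy : y ∈ S) :
    U y ≤ U x + ⟪G x, y - x⟫ + K / 2 * ‖y - x‖ ^ 2 := by
  have hpow : Tendsto (fun n : ℕ => (1 / 2 : ℝ) ^ n) atTop (𝓝 0) :=
    tendsto_pow_atTop_nhds_zero_of_lt_one (by norm_num) (by norm_num)
  have hlim : Tendsto (fun n : ℕ => U x + ⟪G x, y - x⟫ + K / 2 * (1 + (1 / 2) ^ n) * ‖y - x‖ ^ 2)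
      atTop (𝓝 (U x + ⟪G x, y - x⟫ + K / 2 * (1 + 0) * ‖y - x‖ ^ 2)) :=
    (((hpow.const_add 1).const_mul _).mul_const _).const_add _
  rw [add_zero, mul_one] at hlim
  exact ge_of_tendsto' hlim fun n => hU.le_add_inner_add_one_add_pow hS hG n hx hy

theorem two_mul_inner_sub_le (hU : StrongSubgradientOn U G 0 S) (hS : Convex ℝ S)
    (hG : LipschitzOnWith K G S) (hx : x ∈ S) (hy : y ∈ S) (hxv : x + v ∈ S) (hyv : y - v ∈ S) :
    2 * ⟪G y - G x, v⟫ ≤ ⟪G y - G x, y - x⟫ + K * ‖v‖ ^ 2 := by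
  have hx_step := hU.le_add_inner_add_sq hS hG hx hxv
  have hy_step := hU.le_add_inner_add_sq hS hG hy hyv
  have hx_conv := hU.add_inner_le hx hyv
  have hy_conv := hU.add_inner_le hy hxv
  simp only [add_sub_cancel_left, sub_sub_cancel_left, norm_neg, inner_sub_left, inner_sub_right,
    inner_add_right, inner_neg_right] at *
  linarith

-- The inequality for `x`, `y`, `v` is twice the sum of those for the two halves of the segment and
-- the vector `v / 2`, so `n` halvings reduce the steps taken from `v` to `v / 2 ^ n`.
theorem two_mul_inner_sub_le_of_pow (hU : StrongSubgradientOn U G 0 S) (hS : Convex ℝ S)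
    (hG : LipschitzOnWith K G S) (n : ℕ)
    (hx : x + (1 / 2 : ℝ) ^ n • v ∈ S) (hx' : x - (1 / 2 : ℝ) ^ n • v ∈ S)
    (hy : y + (1 / 2 : ℝ) ^ n • v ∈ S) (hy' : y - (1 / 2 : ℝ) ^ n • v ∈ S) :
    2 * ⟪G y - G x, v⟫ ≤ ⟪G y - G x, y - x⟫ + K * ‖v‖ ^ 2 := by
  induction n generalizing x y v with
  | zero =>
    have mem_of_add_sub {p w : E} (h : p + w ∈ S) (h' : p - w ∈ S) : p ∈ S := by
      simpa using hS.midpoint_mem h h'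
    simp only [pow_zero, one_smul] at *
    exact hU.two_mul_inner_sub_le hS hG (mem_of_add_sub hx hx') (mem_of_add_sub hy hy') hx hy'
  | succ n ih =>
    have hm {w : E} (hxw : x + w ∈ S) (hyw : y + w ∈ S) : midpoint ℝ x y + w ∈ S := by
      convert hS.midpoint_mem hxw hyw using 1
      simp only [midpoint_eq_smul_add, invOf_eq_inv]
      module
    simp only [pow_succ, mul_smul, sub_eq_add_neg] at *
    have hxm := ih hx hx' (hm hx hy) (hm hx' hy')
    have hmy := ih (hm hx hy) (hm hx' hy') hy hy'
    simp only [← sub_eq_add_neg, midpoint_sub_left, right_sub_midpoint, inner_smul_right, norm_smul,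
      inner_sub_left, invOf_eq_inv, norm_div, norm_one, Real.norm_ofNat] at *
    linarith

-- With `v = t • (a - b)`, a point of `S` moved towards the midpoint of `a` and `b` by the fraction
-- `2 * t / 2 ^ n` has room for the steps `± v / 2 ^ n`; let `n → ∞`.
theorem two_mul_inner_sub_le_of_mem_vectorSpan (hU : StrongSubgradientOn U G 0 S)
    (hS : Convex ℝ S) (hG : LipschitzOnWith K G S) (hx : x ∈ S) (hy : y ∈ S)
    (hv : v ∈ vectorSpan ℝ S) :
    2 * ⟪G y - G x, v⟫ ≤ ⟪G y - G x, y - x⟫ + K * ‖v‖ ^ 2 := by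
  obtain ⟨a, ha, b, hb, t, ht, rfl⟩ := exists_nonneg_smul_sub_eq_of_mem_vectorSpan hS ⟨x, hx⟩ hv
  set τ : ℕ → ℝ := fun n => 2 * t * (1 / 2) ^ n with hτ_def
  set shrink : E → ℕ → E := fun p n => AffineMap.lineMap p (midpoint ℝ a b) (τ n) with hshrink
  have hτ : Tendsto τ atTop (𝓝 0) := by
    simpa only [mul_zero] using (tendsto_pow_atTop_nhds_zero_of_lt_one (r := (1 / 2 : ℝ))
      (by norm_num) (by norm_num)).const_mul (2 * t)
  have hτ_mem : ∀ᶠ n in atTop, τ n ∈ Set.Icc 0 1 :=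
    (hτ.eventually_le_const one_pos).mono fun n hn => ⟨by positivity, hn⟩
  have hshrink_lim (p : E) : Tendsto (shrink p) atTop (𝓝 p) := by
    have h : Continuous (AffineMap.lineMap (k := ℝ) p (midpoint ℝ a b)) :=
      AffineMap.lineMap_continuous
    simpa only [AffineMap.lineMap_apply_zero] using! (h.tendsto 0).comp hτ
  have hG_lim {p : E} (hp : p ∈ S) : Tendsto (fun n => G (shrink p n)) atTop (𝓝 (G p)) := by
    refine (hG.continuousOn p hp).tendsto.comp
      (tendsto_nhdsWithin_iff.2 ⟨hshrink_lim p, hτ_mem.mono fun n hn => ?_⟩)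
    exact hS.lineMap_mem hp (hS.midpoint_mem ha hb) hn
  have hΔG := (hG_lim hy).sub (hG_lim hx)
  refine le_of_tendsto_of_tendsto ((hΔG.inner tendsto_const_nhds).const_mul 2)
    ((hΔG.inner ((hshrink_lim y).sub (hshrink_lim x))).add_const _) (hτ_mem.mono fun n hn => ?_)
  have hadd {p : E} (hp : p ∈ S) : shrink p n + (1 / 2 : ℝ) ^ n • t • (a - b) ∈ S := by
    convert hS.lineMap_mem hp ha hn using 1
    simp only [hshrink, hτ_def, AffineMap.lineMap_apply_module, midpoint_eq_smul_add, invOf_eq_inv]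
    module
  have hsub {p : E} (hp : p ∈ S) : shrink p n - (1 / 2 : ℝ) ^ n • t • (a - b) ∈ S := by
    convert hS.lineMap_mem hp hb hn using 1
    simp only [hshrink, hτ_def, AffineMap.lineMap_apply_module, midpoint_eq_smul_add, invOf_eq_inv]
    module
  exact hU.two_mul_inner_sub_le_of_pow hS hG n (hadd hx) (hsub hx) (hadd hy) (hsub hy)

theorem norm_sub_sq_le_mul_inner (hU : StrongSubgradientOn U G 0 S) (hS : Convex ℝ S)
    (hG : LipschitzOnWith K G S) (hx : x ∈ S) (hy : y ∈ S)
    (hGx : G x ∈ vectorSpan ℝ S) (hGy : G y ∈ vectorSpan ℝ S) :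
    ‖G y - G x‖ ^ 2 ≤ K * ⟪G y - G x, y - x⟫ := by
  rcases eq_zero_or_pos K with rfl | hK
  · simpa using hG.norm_sub_le hy hx
  have hK' : (0 : ℝ) < K := hK
  have h := hU.two_mul_inner_sub_le_of_mem_vectorSpan hS hG hx hy
    (Submodule.smul_mem _ (K : ℝ)⁻¹ (Submodule.sub_mem _ hGy hGx))
  rw [inner_smul_right, real_inner_self_eq_norm_sq, norm_smul, mul_pow, norm_inv,
    NNReal.norm_eq] at h
  field_simp at h
  linarith

end StrongSubgradientOn

end Cocoercivity

section Iteration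

variable {E : Type*} [AddCommGroup E] [Module ℝ E]
  {S : Set E} {G : E → E} {γ h q : ℝ} {g ξ : ℕ → E}

/-- The NAG-SC iteration with friction `γ` and step `h`, for positions `g`, momenta `ξ` and a field
`G` in the role of the gradient. At `k = 0` the truncated `k - 1` makes the correction term
vanish. -/
structure IsNagSC (G : E → E) (γ h : ℝ) (g ξ : ℕ → E) : Prop where
  momentum : ∀ k, ξ (k + 1) = (1 - γ * h) • ξ k
    - ((1 - γ * h) * h) • (G (g k) - G (g (k - 1))) - h • G (g k)
  position : ∀ k, g (k + 1) = g k + h • ξ (k + 1)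

namespace IsNagSC

theorem rescale (hN : IsNagSC G γ h g ξ) :
    IsNagSC (fun x => h ^ 2 • G x) (γ * h) 1 g (fun k => h • ξ k) where
  momentum k := by rw [hN.momentum k]; module
  position k := by rw [hN.position k, one_smul]

theorem gradient_mem_vectorSpan (hN : IsNagSC G q 1 g ξ) (hq : q < 1)
    (hg : ∀ k, g k ∈ S) (hg0 : g 0 - ξ 0 ∈ S) (k : ℕ) : G (g k) ∈ vectorSpan ℝ S := by
  have hξ (k : ℕ) : ξ k ∈ vectorSpan ℝ S := by
    cases k with
    | zero => simpa using vsub_mem_vectorSpan ℝ (hg 0) hg0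
    | succ k => simpa [hN.position k] using vsub_mem_vectorSpan ℝ (hg (k + 1)) (hg k)
  induction k with
  | zero =>
    have h : G (g 0) = (1 - q) • ξ 0 - ξ 1 := by
      rw [hN.momentum 0, Nat.zero_sub]
      module
    rw [h]
    exact Submodule.sub_mem _ (Submodule.smul_mem _ _ (hξ 0)) (hξ 1)
  | succ k ih =>
    have h : (2 - q) • G (g (k + 1)) = (1 - q) • (ξ (k + 1) + G (g k)) - ξ (k + 2) := by
      rw [hN.momentum (k + 1), Nat.add_sub_cancel]
      module
    rw [← Submodule.smul_mem_iff _ (show 2 - q ≠ 0 by linarith), h]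
    exact Submodule.sub_mem _ (Submodule.smul_mem _ _ (Submodule.add_mem _ (hξ _) ih)) (hξ _)

end IsNagSC

end Iteration

/-- The NAG-SC Lyapunov function at position `x` and momentum `v`, with `G` in the role of the
gradient of `U`; along the iteration `x - h • v` is the previous position. -/
noncomputable def nagLyapunov {E : Type*} [NormedAddCommGroup E] [NormedSpace ℝ E]
    (U : E → ℝ) (G : E → E) (gstar : E) (γ h : ℝ) (x v : E) : ℝ :=
  (1 / (1 - γ * h)) * (U (x - h • v) - U gstar) + (1 / 4 : ℝ) * ‖v‖ ^ 2
    + (1 / 4 : ℝ) * ‖v + (γ / (1 - γ * h)) • (x - gstar) + h • G (x - h • v)‖ ^ 2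
    - (h ^ 2 * (2 - γ * h) / (4 * (1 - γ * h))) * ‖G (x - h • v)‖ ^ 2

theorem nagLyapunov_rescale {E : Type*} [NormedAddCommGroup E] [NormedSpace ℝ E]
    (U : E → ℝ) (G : E → E) (gstar : E) (γ h : ℝ) (x v : E) :
    nagLyapunov (fun x => h ^ 2 * U x) (fun x => h ^ 2 • G x) gstar (γ * h) 1 x (h • v)
      = h ^ 2 * nagLyapunov U G gstar γ h x v := by
  have hmixed : h • v + (γ * h / (1 - γ * h)) • (x - gstar) + h ^ 2 • G (x - h • v)
      = h • (v + (γ / (1 - γ * h)) • (x - gstar) + h • G (x - h • v)) := by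
    module
  have hsq (a : ℝ) (w : E) : ‖a • w‖ ^ 2 = a ^ 2 * ‖w‖ ^ 2 := by
    rw [norm_smul, mul_pow, Real.norm_eq_abs, sq_abs]
  simp only [nagLyapunov, mul_one, one_smul, one_pow, hmixed, hsq]
  ring

section Contraction

variable {E : Type*} [NormedAddCommGroup E] [InnerProductSpace ℝ E]
  {S : Set E} {U : E → ℝ} {G : E → E} {gstar x d d' : E} {γ h q : ℝ}

theorem nagLyapunov_unit_step_sub_eq (hq : 1 - q ≠ 0)
    (hd' : d' = (1 - q) • (d - (G x - G (x - d))) - G x) :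
    4 * (1 - q) ^ 2 * (nagLyapunov U G gstar q 1 (x + d') d' - nagLyapunov U G gstar q 1 x d)
      = 4 * (1 - q) * (U x - U (x - d) - ⟪G x, d⟫)
        - q * (2 - q) * ‖d'‖ ^ 2 - 2 * q * ⟪G x, x - gstar - G x⟫
        - 2 * (1 - q) ^ 2 * ⟪G x - G (x - d), d⟫
        + (1 - q) * (3 - 2 * q) * ‖G x - G (x - d)‖ ^ 2
        + 2 * q * (1 - q) * ⟪G x, G x - G (x - d)⟫ := by
  simp only [nagLyapunov, one_smul, add_sub_cancel_right, mul_one, one_pow, one_mul]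
  rw [add_sub_right_comm x d' gstar]
  generalize x - gstar = z
  generalize G x = r at *
  generalize G (x - d) = s at *
  subst hd'
  simp only [← real_inner_self_eq_norm_sq, inner_add_left, inner_add_right, inner_sub_left,
    inner_sub_right, real_inner_smul_left, real_inner_smul_right, real_inner_comm d r,
    real_inner_comm d s, real_inner_comm d z, real_inner_comm r s, real_inner_comm r z,
    real_inner_comm s z]
  field_simp
  ring

theorem nagLyapunov_unit_step_sub_le (hq0 : 0 < q) (hq1 : q < 1)
    (hd' : d' = (1 - q) • (d - (G x - G (x - d))) - G x)
    (hstrong : U x + q ^ 2 / 8 * ‖d‖ ^ 2 ≤ U (x - d) + ⟪G x, d⟫)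
    (hcoco : 2 * ‖G x - G (x - d)‖ ^ 2 ≤ ⟪G x - G (x - d), d⟫)
    (hcoco_star : 2 * ‖G x‖ ^ 2 ≤ ⟪G x, x - gstar⟫) :
    4 * (1 - q) ^ 2 * (nagLyapunov U G gstar q 1 (x + d') d' - nagLyapunov U G gstar q 1 x d)
      ≤ -(q * ‖d'‖ ^ 2) - 3 / 2 * q * ⟪G x, x - gstar - G x⟫ := by
  rw [nagLyapunov_unit_step_sub_eq (sub_pos.2 hq1).ne' hd', inner_sub_right (G x) (x - gstar),
    real_inner_self_eq_norm_sq]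
  generalize G x - G (x - d) = D at *
  have : 0 < 1 - q := sub_pos.2 hq1
  have hD_le : 2 * ‖D‖ ≤ ‖d‖ := by
    by_contra! hlt
    have := real_inner_le_norm D d
    nlinarith [norm_nonneg D, norm_nonneg d]
  have hpotential : 4 * (1 - q) * (U x - U (x - d) - ⟪G x, d⟫)
      ≤ 4 * (1 - q) * -(q ^ 2 / 8 * (2 * ‖D‖) ^ 2) := by
    have : q ^ 2 / 8 * (2 * ‖D‖) ^ 2 ≤ q ^ 2 / 8 * ‖d‖ ^ 2 := by gcongr
    gcongr
    linarith
  have hkinetic : q * ‖d'‖ ^ 2 ≤ q * (2 - q) * ‖d'‖ ^ 2 := by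
    gcongr
    exact le_mul_of_one_le_right hq0.le (by linarith)
  have hcorrection : 2 * (1 - q) ^ 2 * (2 * ‖D‖ ^ 2) ≤ 2 * (1 - q) ^ 2 * ⟪D, d⟫ := by
    gcongr
  have hcross : 2 * q * (1 - q) * ⟪G x, D⟫
      ≤ (1 - q) * (q ^ 2 + (1 - q) ^ 2) * ‖D‖ ^ 2 + q / 2 * ‖G x‖ ^ 2 := by
    calc 2 * q * (1 - q) * ⟪G x, D⟫ ≤ 2 * q * (1 - q) * (‖G x‖ * ‖D‖) := by
          gcongr; exact real_inner_le_norm _ _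
      _ = (1 - q) * (q ^ 2 + (1 - q) ^ 2) * ‖D‖ ^ 2 + q / 2 * ‖G x‖ ^ 2
          - (q / 2 * (‖G x‖ - 2 * (1 - q) * ‖D‖) ^ 2
            + (1 - q) * (q - (1 - q)) ^ 2 * ‖D‖ ^ 2) := by ring
      _ ≤ _ := sub_le_self _ (by positivity)
  have hgradient : q / 2 * (2 * ‖G x‖ ^ 2) ≤ q / 2 * ⟪G x, x - gstar⟫ := by gcongr
  linarith

theorem nagLyapunov_unit_step_le (hq0 : 0 < q) (hq1 : q < 1)
    (hgrowth : U gstar + q ^ 2 / 8 * ‖x - gstar‖ ^ 2 ≤ U x)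
    (hstrong : U x + q ^ 2 / 8 * ‖x - gstar‖ ^ 2 ≤ U gstar + ⟪G x, x - gstar⟫)
    (hcoco_star : 2 * ‖G x‖ ^ 2 ≤ ⟪G x, x - gstar⟫) :
    (1 - q) ^ 2 * nagLyapunov U G gstar q 1 (x + d') d'
      ≤ ‖d'‖ ^ 2 + 9 * ⟪G x, x - gstar - G x⟫ := by
  have hmixed : (1 - q) • (d' + (q / (1 - q)) • (x + d' - gstar) + G x)
      = d' + G x + q • (x - gstar - G x) := by
    have : 1 - q ≠ 0 := (sub_pos.2 hq1).ne'
    match_scalars <;> field_simp <;> ring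
  have hvalue : (1 - q) ^ 2 * nagLyapunov U G gstar q 1 (x + d') d'
      = (1 - q) * (U x - U gstar) + (1 - q) ^ 2 / 4 * ‖d'‖ ^ 2
        + 1 / 4 * ‖d' + G x + q • (x - gstar - G x)‖ ^ 2 - (1 - q) * (2 - q) / 4 * ‖G x‖ ^ 2 := by
    have : 1 - q ≠ 0 := (sub_pos.2 hq1).ne'
    rw [← hmixed, norm_smul, mul_pow, Real.norm_eq_abs, sq_abs]
    simp only [nagLyapunov, one_smul, add_sub_cancel_right, mul_one, one_pow, one_mul]
    field_simp
  rw [hvalue]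
  have hq1' : 0 < 1 - q := sub_pos.2 hq1
  have hinner : ⟪G x, x - gstar - G x⟫ = ⟪G x, x - gstar⟫ - ‖G x‖ ^ 2 := by
    rw [inner_sub_right, real_inner_self_eq_norm_sq]
  have hG_nonneg : 0 ≤ ‖G x‖ ^ 2 := by positivity
  have hdist_nonneg : 0 ≤ q ^ 2 / 8 * ‖x - gstar‖ ^ 2 := by positivity
  have hpotential : (1 - q) * (U x - U gstar) ≤ 2 * ⟪G x, x - gstar - G x⟫ := by
    have : (1 - q) * (U x - U gstar) ≤ U x - U gstar :=
      mul_le_of_le_one_left (by linarith) (by linarith)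
    linarith
  have hkinetic : (1 - q) ^ 2 / 4 * ‖d'‖ ^ 2 ≤ 1 / 4 * ‖d'‖ ^ 2 := by
    gcongr
    exact pow_le_one₀ hq1'.le (by linarith)
  have hdist : ‖q • (x - gstar - G x)‖ ^ 2 ≤ 8 * ⟪G x, x - gstar - G x⟫ := by
    calc ‖q • (x - gstar - G x)‖ ^ 2
        = q ^ 2 * (‖x - gstar‖ ^ 2 - 2 * ⟪G x, x - gstar⟫ + ‖G x‖ ^ 2) := by
          rw [norm_smul, mul_pow, Real.norm_eq_abs, sq_abs, norm_sub_sq_real, real_inner_comm]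
      _ ≤ q ^ 2 * ‖x - gstar‖ ^ 2 := by gcongr; linarith
      _ ≤ 8 * ⟪G x, x - gstar - G x⟫ := by linarith
  have hmixed_le := norm_add₃_sq_le d' (G x) (q • (x - gstar - G x))
  have hgradient : 0 ≤ (1 - q) * (2 - q) / 4 * ‖G x‖ ^ 2 := by
    have : 0 < 2 - q := by linarith
    positivity
  linarith

theorem nagLyapunov_unit_step_contraction (hS : Convex ℝ S) (hq0 : 0 < q) (hq1 : q < 1)
    (hU : StrongSubgradientOn U G (q ^ 2 / 4) S) (hG : LipschitzOnWith (1 / 2) G S)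
    (hstar : gstar ∈ S) (hcrit : G gstar = 0) (hx : x ∈ S) (hxd : x - d ∈ S)
    (hGx : G x ∈ vectorSpan ℝ S) (hGxd : G (x - d) ∈ vectorSpan ℝ S)
    (hd' : d' = (1 - q) • (d - (G x - G (x - d))) - G x) :
    (1 + q / 60) * nagLyapunov U G gstar q 1 (x + d') d' ≤ nagLyapunov U G gstar q 1 x d := by
  have hconv : StrongSubgradientOn U G 0 S := hU.mono (by positivity)
  have hcoco := hconv.norm_sub_sq_le_mul_inner hS hG hxd hx hGxd hGx
  have hcoco_star := hconv.norm_sub_sq_le_mul_inner hS hG hstar hx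
    (hcrit ▸ Submodule.zero_mem _) hGx
  have hback := hU x hx (x - d) hxd
  have hto_star := hU x hx gstar hstar
  have hfrom_star := hU gstar hstar x hx
  rw [← neg_sub x gstar, inner_neg_right, norm_neg] at hto_star
  rw [hcrit, inner_zero_left, add_zero] at hfrom_star
  rw [hcrit, sub_zero] at hcoco_star
  rw [sub_sub_cancel_left, inner_neg_right, norm_neg] at hback
  rw [sub_sub_cancel] at hcoco
  push_cast at hcoco hcoco_star
  have hdissipation := nagLyapunov_unit_step_sub_le (U := U) (gstar := gstar) hq0 hq1 hd'
    (by linarith) (by linarith) (by linarith)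
  have hle := nagLyapunov_unit_step_le (U := U) (G := G) (gstar := gstar) (x := x) (d' := d') hq0
    hq1 (by linarith) (by linarith) (by linarith)
  have hinner : 0 ≤ ⟪G x, x - gstar - G x⟫ := by
    rw [inner_sub_right, real_inner_self_eq_norm_sq]
    linarith [sq_nonneg ‖G x‖]
  have hscale : 0 < 4 * (1 - q) ^ 2 := by have := sub_pos.2 hq1; positivity
  refine le_of_mul_le_mul_left ?_ hscale
  linarith [mul_le_mul_of_nonneg_left hle (show 0 ≤ q / 15 by positivity), mul_nonneg hq0.le hinner,
    mul_nonneg hq0.le (sq_nonneg ‖d'‖)]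

theorem nag_sc_lyapunov_one_step_general (hS : Convex ℝ S) {L : ℝ≥0} {μ : ℝ}
    (hU : StrongSubgradientOn U G μ S) (hG : LipschitzOnWith L G S)
    (hstar : gstar ∈ S) (hcrit : G gstar = 0)
    (hγ : 0 < γ) (hγμ : γ ^ 2 ≤ 4 * μ) (hh : 0 < h) (hLh : L * h ^ 2 ≤ 1 / 2) (hγh : γ * h < 1)
    {g ξ : ℕ → E} (hN : IsNagSC G γ h g ξ) (hgS : ∀ k, g k ∈ S) (hg0 : g 0 - h • ξ 0 ∈ S)
    {k : ℕ} (hk : 1 ≤ k) :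
    nagLyapunov U G gstar γ h (g (k + 1)) (ξ (k + 1)) - nagLyapunov U G gstar γ h (g k) (ξ k)
      ≤ -(γ * h / 60) * nagLyapunov U G gstar γ h (g (k + 1)) (ξ (k + 1)) := by
  obtain ⟨j, rfl⟩ := Nat.exists_eq_add_of_le' hk
  have hU' :
      StrongSubgradientOn (fun x => h ^ 2 * U x) (fun x => h ^ 2 • G x) ((γ * h) ^ 2 / 4) S :=
    (hU.const_mul (sq_nonneg h)).mono (by nlinarith [sq_nonneg h])
  have hG' : LipschitzOnWith (1 / 2) (fun x => h ^ 2 • G x) S := by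
    refine ((lipschitzWith_smul (h ^ 2)).comp_lipschitzOnWith hG).weaken ?_
    rw [← NNReal.coe_le_coe]
    simpa [mul_comm] using hLh
  have hN' := hN.rescale
  have hspan := hN'.gradient_mem_vectorSpan hγh hgS hg0
  have hprev : g (j + 1) - h • ξ (j + 1) = g j := by rw [hN.position j]; abel
  have hstep := nagLyapunov_unit_step_contraction (x := g (j + 1)) (d := h • ξ (j + 1))
    (d' := h • ξ (j + 2)) hS (mul_pos hγ hh) hγh hU' hG' hstar
    (by simp only [hcrit, smul_zero]) (hgS _) (hprev ▸ hgS j) (hspan _) (hprev ▸ hspan j)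
    (by rw [hprev, hN'.momentum (j + 1), Nat.add_sub_cancel]; module)
  rw [← hN.position (j + 1), nagLyapunov_rescale, nagLyapunov_rescale] at hstep
  refine le_of_mul_le_mul_left ?_ (sq_pos_of_pos hh)
  linarith

end Contraction

/-- Lemma D.1 (one-step contraction of the NAG-SC Lyapunov function), Euclidean instance
(in which the curvature term `p(a)` equals `1`). Note `g (k - 1)` uses truncated
subtraction on `ℕ`, so at `k = 0` it encodes the convention `∇U(g₋₁) := ∇U(g₀)`. -/
theorem nag_sc_lyapunov_one_step
    {E : Type*} [NormedAddCommGroup E] [InnerProductSpace ℝ E] [CompleteSpace E]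
    (S : Set E) (hS : Convex ℝ S)
    (U : E → ℝ) (L μ : ℝ) (hμ : 0 < μ) (hμL : μ ≤ L)
    (hsmooth : ∀ x y : E, ‖gradient U x - gradient U y‖ ≤ L * ‖x - y‖)
    (hstrong : ∀ x ∈ S, ∀ y ∈ S,
      U x + ⟪gradient U x, y - x⟫ + μ / 2 * ‖y - x‖ ^ 2 ≤ U y)
    (gstar : E) (hgstarS : gstar ∈ S) (hmin : ∀ x ∈ S, U gstar ≤ U x)
    (hcrit : gradient U gstar = 0)
    (γ h : ℝ) (hγ : γ = 2 * Real.sqrt μ)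
    (hh : h = min (1 / Real.sqrt (2 * L)) (1 / 2)) (hγh : γ * h < 1)
    (g ξ : ℕ → E)
    (hξ : ∀ k : ℕ, ξ (k + 1) = (1 - γ * h) • ξ k
      - ((1 - γ * h) * h) • (gradient U (g k) - gradient U (g (k - 1)))
      - h • gradient U (g k))
    (hg : ∀ k : ℕ, g (k + 1) = g k + h • ξ (k + 1))
    (hgS : ∀ k : ℕ, g k ∈ S) (hg0S : g 0 - h • ξ 0 ∈ S)
    (LNAG : E → E → ℝ)
    (hLNAG : ∀ x v : E, LNAG x v =
      (1 / (1 - γ * h)) * (U (x - h • v) - U gstar) + (1 / 4 : ℝ) * ‖v‖ ^ 2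
        + (1 / 4 : ℝ) * ‖v + (γ / (1 - γ * h)) • (x - gstar)
            + h • gradient U (x - h • v)‖ ^ 2
        - (h ^ 2 * (2 - γ * h) / (4 * (1 - γ * h))) * ‖gradient U (x - h • v)‖ ^ 2) :
    ∀ k : ℕ, 1 ≤ k →
      LNAG (g (k + 1)) (ξ (k + 1)) - LNAG (g k) (ξ k)
        ≤ -((Real.sqrt μ / 30) * min (1 / Real.sqrt (2 * L)) (1 / 2))
            * LNAG (g (k + 1)) (ξ (k + 1)) := by
  intro k hk
  have hL : 0 < L := hμ.trans_le hμL
  obtain rfl : LNAG = nagLyapunov U (gradient U) gstar γ h := funext₂ hLNAG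
  rw [← hh, show √μ / 30 * h = γ * h / 60 by rw [hγ]; ring]
  lift L to ℝ≥0 using hL.le
  exact nag_sc_lyapunov_one_step_general hS hstrong
    (LipschitzOnWith.of_dist_le_mul fun x _ y _ => by simpa only [dist_eq_norm] using hsmooth x y)
    hgstarS hcrit (by rw [hγ]; positivity) (by rw [hγ, mul_pow, Real.sq_sqrt hμ.le]; norm_num)
    (by rw [hh]; positivity) (hh ▸ mul_min_one_div_sqrt_sq_le hL one_half_pos) hγh ⟨hξ, hg⟩ hgS
    hg0S hk
end
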